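/- Let 2 ≤ T < S < n and λ > 0, and condition on an outcome of M_n for which there is a set B of size n − S with {1,…,S} ⊆ B ⊆ {1,…,n} such that M_n[{S+1,…,n}, B] is λ-heavy. Then with probability at least 1 − 5S·2^{−T} − e^{−S/40}, there is a set B' of size n + 5S − T with {1,…,T} ⊆ B' ⊆ {1,…,n+5S} such that M_{n+5S}[{T+1,…,n+5S}, B'] is (λ/2^{S−T})-heavy. -/

import Mathlib

/-!
The columns `n, n + 1, …` of the extension are exposed one at a time. The state after exposing the
first `m` columns is a number `s` for which the leading `m × m` block has a heavy submatrix with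
rows `s ≤ i < m` and columns `B ⊇ {i | i < s}` (`HeavyAt`). With `m` (the new index `a`) exposed,
two things can happen.

* `s` can be kept, except with probability `2 ^ (-s)` (`card_not_keep`): adding the row `a` and any
  of the `s` unused columns `j`, the permanent becomes `± p + g`, where `p` is the heavy permanent,
  the sign is the new entry at `j`, and `g` depends only on the new entries at `B`. One of the two
  signs is good, and these signs are independent.
* `s` can be lowered by one with probability at least `1 / 4`, losing a factor `2`
  (`card_decrease`): adding the row and the column `a`, the permanent is a quadratic polynomial in
  the new entries, so with probability at least `1 / 4` it is at least as large as a given mixed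
  coefficient. Such a coefficient is a sum of two permanents, which may cancel, but three
  suitable ones satisfy `(p + q) + (p + q') - (q + q') = 2 * p`, so one of them is at least `p / 2`.

A backwards induction over the columns (`exists_condProb`) then bounds the probability of not
reaching `s = T` by `5 S 2 ^ (-T) + (5 / 4) ^ (S - T) * (19 / 20) ^ (5 S)`; the second term is the
exponential moment bound for having fewer than `S - T` successes in `5 S` trials of success
probability `1 / 4`, and it is at most `exp (- S / 40)` as `(5 / 4) * (19 / 20) ^ 5 ≤ 1 - 1 / 40`.
-/

open Finset

/-- The real number (`1` or `-1`) associated to a Boolean: a Rademacher value. -/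
noncomputable def rad (b : Bool) : ℝ := if b then 1 else -1

/-- The permanent of the submatrix of `M` with row set `A` and column set `B`,
defined as a sum over all bijections between `A` and `B` (it equals `0` if
`A.card ≠ B.card`). Since the permanent is invariant under row and column
permutations, this faithfully represents `per M[A,B]`. -/
noncomputable def permOn {m n : ℕ} (M : Matrix (Fin m) (Fin n) ℝ)
    (A : Finset (Fin m)) (B : Finset (Fin n)) : ℝ :=
  ∑ σ : {x // x ∈ A} ≃ {y // y ∈ B}, ∏ i : {x // x ∈ A}, M i.1 (σ i).1

/-- The random symmetric extension of a fixed `n' × n'` matrix `M` to an `n × n` matrix: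
the top-left `n' × n'` block is `M`, and the remaining entries are Rademacher values
determined symmetrically by the Boolean data `ω`. As `ω` ranges uniformly over all Boolean
data, the new entries (on and above the diagonal) are i.i.d. Rademacher random variables. -/
noncomputable def extSym {n' : ℕ} (n : ℕ) (M : Matrix (Fin n') (Fin n') ℝ)
    (ω : Fin n → Fin n → Bool) : Matrix (Fin n) (Fin n) ℝ :=
  fun i j =>
    if h : (i : ℕ) < n' ∧ (j : ℕ) < n' then M ⟨i, h.1⟩ ⟨j, h.2⟩
    else if i ≤ j then rad (ω i j) else rad (ω j i)

open Classical in
/-- The probability of the event `P` for the random symmetric extension of `M` to size `n`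
(i.e. conditionally on the outcome `M` for the top-left block). -/
noncomputable def probExt {n' : ℕ} (n : ℕ) (M : Matrix (Fin n') (Fin n') ℝ)
    (P : Matrix (Fin n) (Fin n) ℝ → Prop) : ℝ :=
  ((univ.filter fun ω : Fin n → Fin n → Bool => P (extSym n M ω)).card : ℝ) / 2 ^ (n * n)

/-! ### Permanents of submatrices and Laplace expansion -/

lemma permOn_congr {m n : ℕ} {M M' : Matrix (Fin m) (Fin n) ℝ} {A : Finset (Fin m)}
    {B : Finset (Fin n)} (h : ∀ i ∈ A, ∀ j ∈ B, M i j = M' i j) :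
    permOn M A B = permOn M' A B := by
  unfold permOn
  refine sum_congr rfl fun σ _ => prod_congr rfl fun i _ => h _ i.2 _ (σ i).2

lemma permOn_transpose {m n : ℕ} (M : Matrix (Fin m) (Fin n) ℝ) (A : Finset (Fin m))
    (B : Finset (Fin n)) : permOn M.transpose B A = permOn M A B := by
  unfold permOn
  refine Fintype.sum_equiv ⟨Equiv.symm, Equiv.symm, fun _ => rfl, fun _ => rfl⟩ _ _ fun σ => ?_
  refine Fintype.prod_equiv σ _ _ fun i => ?_
  simp [Matrix.transpose]

lemma permOn_map {m n m' n' : ℕ} (M : Matrix (Fin m) (Fin n) ℝ) (f : Fin m' ↪ Fin m)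
    (g : Fin n' ↪ Fin n) (A : Finset (Fin m')) (B : Finset (Fin n')) :
    permOn M (A.map f) (B.map g) = permOn (M.submatrix f g) A B := by
  unfold permOn
  refine (Fintype.sum_equiv (Equiv.equivCongr (Finset.equivMap f A) (Finset.equivMap g B)) _ _
    fun σ => ?_).symm
  refine Fintype.prod_equiv (Finset.equivMap f A) _ _ fun i => ?_
  simp

/-- Laplace expansion of the permanent along the row `r`. -/
lemma permOn_insert_row {m n : ℕ} (M : Matrix (Fin m) (Fin n) ℝ) {A : Finset (Fin m)}
    (B : Finset (Fin n)) {r : Fin m} (hr : r ∉ A) :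
    permOn M (insert r A) B = ∑ b ∈ B, M r b * permOn M A (B.erase b) := by
  classical
  have e1 : permOn M (insert r A) B = ∑ e : Option {x // x ∈ A} ≃ {y // y ∈ B},
      M r (e none).1 * ∏ i : {x // x ∈ A}, M i.1 (e (some i)).1 := by
    unfold permOn
    refine Fintype.sum_equiv
      (Equiv.equivCongr (Finset.subtypeInsertEquivOption hr) (Equiv.refl _)) _ _ fun σ => ?_
    refine Eq.trans ?_ (Fintype.prod_option (fun o : Option {x // x ∈ A} =>
      M (o.elim r Subtype.val)
        ((Equiv.equivCongr (Finset.subtypeInsertEquivOption hr) (Equiv.refl _)) σ o).1))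
    symm
    refine Fintype.prod_equiv (Finset.subtypeInsertEquivOption hr).symm _ _ fun o => ?_
    cases o <;> simp [Finset.subtypeInsertEquivOption]
  rw [e1, ← Finset.sum_coe_sort B,
    ← (Equiv.sigmaFiberEquiv
      (fun e : Option {x // x ∈ A} ≃ {y // y ∈ B} => e none)).sum_comp,
    Fintype.sum_sigma]
  refine sum_congr rfl fun b _ => ?_
  unfold permOn
  rw [mul_sum]
  let t : {y : {y // y ∈ B} // y ≠ b} ≃ {y // y ∈ B.erase b.1} :=
    { toFun := fun y => ⟨y.1.1, mem_erase.2 ⟨fun h => y.2 (Subtype.ext h), y.1.2⟩⟩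
      invFun := fun y => ⟨⟨y.1, mem_of_mem_erase y.2⟩,
        fun h => ne_of_mem_erase y.2 (congrArg Subtype.val h)⟩
      left_inv := fun _ => rfl
      right_inv := fun _ => rfl }
  refine Fintype.sum_equiv
    ((Equiv.optionSubtype b).trans (Equiv.equivCongr (Equiv.refl _) t)) _ _ fun e => ?_
  have hb : (e.1 none) = b := e.2
  simp [Equiv.sigmaFiberEquiv, hb, t]

/-- Laplace expansion of the permanent along the column `c`. -/
lemma permOn_insert_col {m n : ℕ} (M : Matrix (Fin m) (Fin n) ℝ) (A : Finset (Fin m))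
    {B : Finset (Fin n)} {c : Fin n} (hc : c ∉ B) :
    permOn M A (insert c B) = ∑ i ∈ A, M i c * permOn M (A.erase i) B := by
  rw [← permOn_transpose, permOn_insert_row _ _ hc]
  exact sum_congr rfl fun i _ => by rw [permOn_transpose]; rfl

/-! ### Adding one random row and column -/

lemma abs_rad (b : Bool) : |rad b| = 1 := by cases b <;> simp [rad]

lemma rad_not (b : Bool) : rad (!b) = -rad b := by cases b <;> simp [rad]

/-- Appending the row `a` together with an old unused column `j` preserves heaviness unless the
sign `x j` takes one particular value determined by the signs on `B`. Hence all columns `j ∈ J`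
fail simultaneously for a fraction at most `2 ^ (-|J|)` of the sign vectors. -/
lemma step_keep {N : ℕ} (a : Fin N) (A0 : Matrix (Fin N) (Fin N) ℝ)
    (Ax : (Fin N → Bool) → Matrix (Fin N) (Fin N) ℝ)
    (hold : ∀ x i j, i < a → j < a → Ax x i j = A0 i j)
    (hrow : ∀ x i, i ≤ a → Ax x a i = rad (x i))
    (R B J : Finset (Fin N)) (hR : ∀ i ∈ R, i < a) (hB : ∀ i ∈ B, i < a) (hJ : ∀ i ∈ J, i < a)
    (hJB : ∀ j ∈ J, j ∉ B) (μ : ℝ) (hμ : μ ≤ |permOn A0 R B|) :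
    #{x : Fin N → Bool | ∀ j ∈ J, |permOn (Ax x) (insert a R) (insert j B)| < μ} * 2 ^ #J
      ≤ 2 ^ N := by
  classical
  have haR : a ∉ R := fun h => lt_irrefl _ (hR a h)
  have key : ∀ x, ∀ j ∈ J, permOn (Ax x) (insert a R) (insert j B) =
      rad (x j) * permOn A0 R B +
        ∑ b ∈ B, rad (x b) * permOn A0 R ((insert j B).erase b) := by
    intro x j hj
    rw [permOn_insert_row _ _ haR, sum_insert (hJB j hj), erase_insert (hJB j hj),
      hrow x j (hJ j hj).le,
      permOn_congr (M' := A0) fun i hi k hk => hold x i k (hR i hi) (hB k hk)]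
    congr 1
    refine sum_congr rfl fun b hb => ?_
    rw [hrow x b (hB b hb).le,
      permOn_congr (M' := A0) fun i hi k hk => hold x i k (hR i hi) ?_]
    rcases mem_insert.1 (mem_of_mem_erase hk) with rfl | h
    · exact hJ _ hj
    · exact hB _ h
  have hcard : #{x : Fin N → Bool | ∀ j ∈ J, |permOn (Ax x) (insert a R) (insert j B)| < μ} ≤
      Fintype.card ({i // i ∈ Jᶜ} → Bool) := by
    rw [← Finset.card_univ]
    refine card_le_card_of_injOn (fun x i => x i.1) (fun _ _ => mem_coe.2 (mem_univ _)) ?_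
    intro x hx y hy hxy
    simp only [coe_filter, mem_univ, true_and, Set.mem_ofPred_eq] at hx hy
    have hoff : ∀ i, i ∉ J → x i = y i := fun i hi =>
      congrFun hxy ⟨i, mem_compl.2 hi⟩
    funext j
    by_cases hj : j ∈ J
    · by_contra hne
      have h1 := hx j hj
      have h2 := hy j hj
      rw [key x j hj] at h1
      rw [key y j hj] at h2
      have hs : ∑ b ∈ B, rad (y b) * permOn A0 R ((insert j B).erase b) =
          ∑ b ∈ B, rad (x b) * permOn A0 R ((insert j B).erase b) :=
        sum_congr rfl fun b hb => by rw [hoff b fun h => hJB b h hb]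
      have hr : rad (y j) = -rad (x j) := by
        rw [← rad_not]
        congr 1
        revert hne
        cases x j <;> cases y j <;> simp
      rw [hs, hr] at h2
      have h3 := abs_mul (rad (x j)) (permOn A0 R B)
      rw [abs_rad, one_mul] at h3
      rw [← h3] at hμ
      rw [abs_lt] at h1 h2
      rcases le_abs.1 hμ with h | h <;> linarith [h1.1, h1.2, h2.1, h2.2]
    · exact hoff j hj
  have hc : Fintype.card ({i // i ∈ Jᶜ} → Bool) * 2 ^ #J = 2 ^ N := by
    rw [Fintype.card_fun, Fintype.card_bool, Fintype.card_coe, ← pow_add, card_compl_add_card,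
      Fintype.card_fin]
  calc _ ≤ _ := Nat.mul_le_mul_right _ hcard
    _ = _ := hc

/-- Flip the coordinate `u` of a sign vector. -/
def flipAt {N : ℕ} (u : Fin N) (x : Fin N → Bool) : Fin N → Bool :=
  fun i => if i = u then !x i else x i

lemma flipAt_flipAt {N : ℕ} (u : Fin N) (x : Fin N → Bool) : flipAt u (flipAt u x) = x := by
  funext i
  by_cases h : i = u <;> simp [flipAt, h]

lemma sum_flipAt {N : ℕ} (u : Fin N) (g : (Fin N → Bool) → ℕ) :
    ∑ x, g (flipAt u x) = ∑ x, g x :=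
  (⟨flipAt u, flipAt u, flipAt_flipAt u, flipAt_flipAt u⟩ :
    (Fin N → Bool) ≃ (Fin N → Bool)).sum_comp g

lemma rad_flipAt {N : ℕ} (u i : Fin N) (x : Fin N → Bool) :
    rad (flipAt u x i) = if i = u then -rad (x i) else rad (x i) := by
  unfold flipAt
  split_ifs
  · exact rad_not _
  · rfl

/-- With both the row and the column `a` appended, the permanent is a quadratic polynomial in the
new signs. Its coefficient at `x u * x v` is recovered, up to sign, by averaging over the flips of
these two signs, so one of the four flipped vectors is at least as heavy as the coefficient. -/
lemma step_pair {N : ℕ} (a : Fin N) (A0 : Matrix (Fin N) (Fin N) ℝ)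
    (Ax : (Fin N → Bool) → Matrix (Fin N) (Fin N) ℝ)
    (hold : ∀ x i j, i < a → j < a → Ax x i j = A0 i j)
    (hrow : ∀ x i, i ≤ a → Ax x a i = rad (x i))
    (hcol : ∀ x i, i ≤ a → Ax x i a = rad (x i))
    (R U : Finset (Fin N)) (hR : ∀ i ∈ R, i < a) (hU : ∀ i ∈ U, i < a)
    (u v : Fin N) (huv : u ≠ v) (huR : u ∈ R) (hvR : v ∈ R) (huU : u ∈ U) (hvU : v ∈ U)
    (μ : ℝ)
    (hμ : μ ≤ |permOn A0 (R.erase u) (U.erase v) + permOn A0 (R.erase v) (U.erase u)|) :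
    2 ^ N ≤ 4 * #{x : Fin N → Bool | μ ≤ |permOn (Ax x) (insert a R) (insert a U)|} := by
  classical
  have haR : a ∉ R := fun h => lt_irrefl _ (hR a h)
  have haU : a ∉ U := fun h => lt_irrefl _ (hU a h)
  set f : (Fin N → Bool) → ℝ := fun x => permOn (Ax x) (insert a R) (insert a U) with hf
  have key : ∀ x, f x = rad (x a) * permOn A0 R U +
      ∑ i ∈ U, ∑ r ∈ R, rad (x i) * rad (x r) * permOn A0 (R.erase r) (U.erase i) := by
    intro x
    simp only [hf]
    rw [permOn_insert_row _ _ haR, sum_insert haU, erase_insert haU, hrow x a le_rfl,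
      permOn_congr (M' := A0) fun i hi k hk => hold x i k (hR i hi) (hU k hk)]
    congr 1
    refine sum_congr rfl fun i hi => ?_
    have hai : a ≠ i := fun h => haU (h ▸ hi)
    rw [hrow x i (hU i hi).le, erase_insert_of_ne hai,
      permOn_insert_col _ _ (fun h => haU (mem_of_mem_erase h)), mul_sum]
    refine sum_congr rfl fun r hr => ?_
    rw [hcol x r (hR r hr).le, permOn_congr (M' := A0) fun i hi k hk =>
      hold x i k (hR i (mem_of_mem_erase hi)) (hU k (mem_of_mem_erase hk)), mul_assoc]
  have hau : a ≠ u := fun h => haU (h ▸ huU)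
  have hav : a ≠ v := fun h => haU (h ▸ hvU)
  have hmono : ∀ x (i r : Fin N) (c : ℝ),
      rad (x i) * rad (x r) * c - rad (flipAt u x i) * rad (flipAt u x r) * c
        - rad (flipAt v x i) * rad (flipAt v x r) * c
        + rad (flipAt v (flipAt u x) i) * rad (flipAt v (flipAt u x) r) * c =
      (if i = u then if r = v then 4 * rad (x u) * rad (x v) * c else 0 else 0) +
      (if i = v then if r = u then 4 * rad (x u) * rad (x v) * c else 0 else 0) := by
    intro x i r c
    simp only [rad_flipAt]
    have hvu := huv.symm
    split_ifs <;> first | (subst_vars; contradiction) | (subst_vars; ring)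
  have hD : ∀ x, f x - f (flipAt u x) - f (flipAt v x) + f (flipAt v (flipAt u x)) =
      4 * rad (x u) * rad (x v) *
        (permOn A0 (R.erase u) (U.erase v) + permOn A0 (R.erase v) (U.erase u)) := by
    intro x
    have e : f x - f (flipAt u x) - f (flipAt v x) + f (flipAt v (flipAt u x)) =
        ∑ i ∈ U, ∑ r ∈ R,
        ((if i = u then if r = v then 4 * rad (x u) * rad (x v) *
            permOn A0 (R.erase r) (U.erase i) else 0 else 0) +
        (if i = v then if r = u then 4 * rad (x u) * rad (x v) *
            permOn A0 (R.erase r) (U.erase i) else 0 else 0)) := by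
      simp only [← hmono, sum_add_distrib, sum_sub_distrib, key]
      simp only [rad_flipAt, hau, hav, if_false]
      ring
    rw [e]
    simp only [sum_add_distrib]
    have s1 : ∀ (p q : Fin N) (_ : p ∈ U) (_ : q ∈ R) (g : Fin N → Fin N → ℝ),
        ∑ i ∈ U, ∑ r ∈ R, (if i = p then if r = q then g i r else 0 else 0) = g p q := by
      intro p q hp hq g
      rw [sum_eq_single_of_mem p hp, sum_eq_single_of_mem q hq]
      · simp
      · intro b _ hb; simp [hb]
      · intro b _ hb; simp [hb]
    rw [s1 u v huU hvR (fun i r => 4 * rad (x u) * rad (x v) *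
            permOn A0 (R.erase r) (U.erase i)), s1 v u hvU huR (fun i r =>
            4 * rad (x u) * rad (x v) * permOn A0 (R.erase r) (U.erase i))]
    ring
  have hone : ∀ x, 1 ≤ (if μ ≤ |f x| then 1 else 0) + (if μ ≤ |f (flipAt u x)| then 1 else 0) +
      (if μ ≤ |f (flipAt v x)| then 1 else 0) +
      (if μ ≤ |f (flipAt v (flipAt u x))| then 1 else 0) := by
    intro x
    by_contra hcon
    have h1 : ¬ μ ≤ |f x| := fun h => hcon (by simp only [h, if_true]; omega)
    have h2 : ¬ μ ≤ |f (flipAt u x)| := fun h => hcon (by simp only [h, if_true]; omega)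
    have h3 : ¬ μ ≤ |f (flipAt v x)| := fun h => hcon (by simp only [h, if_true]; omega)
    have h4 : ¬ μ ≤ |f (flipAt v (flipAt u x))| :=
      fun h => hcon (by simp only [h, if_true]; omega)
    rw [not_le] at h1 h2 h3 h4
    have h5 := congrArg abs (hD x)
    rw [abs_mul, abs_mul, abs_mul, abs_rad, abs_rad, abs_of_pos (by norm_num : (0:ℝ) < 4)] at h5
    have h6 : |f x - f (flipAt u x) - f (flipAt v x) + f (flipAt v (flipAt u x))| < 4 * μ := by
      rw [abs_lt] at *
      constructor <;> linarith [h1.1, h1.2, h2.1, h2.2, h3.1, h3.2, h4.1, h4.2]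
    linarith
  have hsum := Finset.sum_le_sum fun x (_ : x ∈ (univ : Finset (Fin N → Bool))) => hone x
  simp only [sum_add_distrib] at hsum
  rw [sum_flipAt u (fun x => if μ ≤ |f x| then 1 else 0),
    sum_flipAt v (fun x => if μ ≤ |f x| then 1 else 0),
    sum_flipAt u (fun x => if μ ≤ |f (flipAt v x)| then 1 else 0),
    sum_flipAt v (fun x => if μ ≤ |f x| then 1 else 0)] at hsum
  simp only [sum_boole, sum_const, card_univ, Fintype.card_fun, Fintype.card_bool,
    Fintype.card_fin, smul_eq_mul, mul_one, Nat.cast_id] at hsum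
  calc 2 ^ N ≤ 4 * #{x | μ ≤ |f x|} := by omega
    _ = _ := rfl

/-! ### Exposing one more column of the random extension -/

/-- The random extension of `M`, with the random data indexed by columns: `ω j` is the data of the
column `j`. -/
noncomputable def extCol {n : ℕ} (N : ℕ) (M : Matrix (Fin n) (Fin n) ℝ)
    (ω : Fin N → Fin N → Bool) : Matrix (Fin N) (Fin N) ℝ :=
  extSym N M fun i j => ω j i

/-- The leading `m × m` block of `A` has a `μ`-heavy submatrix formed by the rows `s ≤ i < m`
(indexing from `0`) and by `m - s` columns including the first `s`. -/
def HeavyAt {N : ℕ} (A : Matrix (Fin N) (Fin N) ℝ) (m s : ℕ) (μ : ℝ) : Prop :=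
  ∃ B : Finset (Fin N), #B + s = m ∧ (∀ i : Fin N, (i : ℕ) < s → i ∈ B) ∧
    (∀ i ∈ B, (i : ℕ) < m) ∧
    μ ≤ |permOn A {i : Fin N | s ≤ (i : ℕ) ∧ (i : ℕ) < m} B|

lemma card_unused {N m s : ℕ} (hm : m ≤ N) {B : Finset (Fin N)} (hcard : #B + s = m)
    (hB : ∀ i ∈ B, (i : ℕ) < m) :
    #(({i : Fin N | (i : ℕ) < m} : Finset (Fin N)) \ B) = s := by
  have h1 : #({i : Fin N | (i : ℕ) < m} : Finset (Fin N)) = m := by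
    rw [Fin.card_filter_val_lt, min_eq_right hm]
  rw [card_sdiff_of_subset (fun i hi => by simpa using hB i hi), h1]
  omega

lemma rows_succ {N s : ℕ} (a : Fin N) (h : s ≤ a) :
    ({i : Fin N | s ≤ (i : ℕ) ∧ (i : ℕ) < (a : ℕ) + 1} : Finset (Fin N)) =
      insert a ({i : Fin N | s ≤ (i : ℕ) ∧ (i : ℕ) < a} : Finset (Fin N)) := by
  ext i
  simp only [mem_filter, mem_univ, true_and, mem_insert, Fin.ext_iff]
  omega

section Step

variable {n N : ℕ} (M : Matrix (Fin n) (Fin n) ℝ) (ω : Fin N → Fin N → Bool) (a : Fin N)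

lemma extCol_old (x : Fin N → Bool) (i j : Fin N) (hi : i < a) (hj : j < a) :
    extCol N M (Function.update ω a x) i j = extCol N M ω i j := by
  simp [extCol, extSym, Function.update_of_ne hi.ne, Function.update_of_ne hj.ne]

lemma extCol_row (ha : n ≤ a) (x : Fin N → Bool) (i : Fin N) (hi : i ≤ a) :
    extCol N M (Function.update ω a x) a i = rad (x i) := by
  have h : ¬ ((a : ℕ) < n ∧ (i : ℕ) < n) := by omega
  simp only [extCol, extSym, h, dif_neg, not_false_eq_true]
  split_ifs with h2
  · obtain rfl : a = i := le_antisymm h2 hi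
    simp
  · simp

lemma extCol_col (ha : n ≤ a) (x : Fin N → Bool) (i : Fin N) (hi : i ≤ a) :
    extCol N M (Function.update ω a x) i a = rad (x i) := by
  have h : ¬ ((i : ℕ) < n ∧ (a : ℕ) < n) := by omega
  simp [extCol, extSym, h, hi]

open Classical in
/-- Exposing one more column keeps `s`, except with probability `2 ^ (-s)`. -/
lemma card_not_keep (ha : n ≤ a) {s : ℕ} {μ : ℝ} (h : HeavyAt (extCol N M ω) a s μ) :
    #{x : Fin N → Bool | ¬ HeavyAt (extCol N M (Function.update ω a x)) (a + 1) s μ} * 2 ^ s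
      ≤ 2 ^ N := by
  obtain ⟨B, hcard, hsB, hBa, hμ⟩ := h
  set J := ({i : Fin N | (i : ℕ) < a} : Finset (Fin N)) \ B with hJ
  have hJc : #J = s := card_unused a.2.le hcard hBa
  have hJ1 : ∀ j ∈ J, j < a := fun j hj => by
    have := (mem_sdiff.1 hj).1
    simpa using this
  have hJ2 : ∀ j ∈ J, j ∉ B := fun j hj => (mem_sdiff.1 hj).2
  have hmain := step_keep a (extCol N M ω) (fun x => extCol N M (Function.update ω a x))
    (extCol_old M ω a) (extCol_row M ω a ha) {i : Fin N | s ≤ (i : ℕ) ∧ (i : ℕ) < a} B J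
    (fun i hi => by simpa using (mem_filter.1 hi).2.2) (fun i hi => hBa i hi) hJ1 hJ2 μ hμ
  rw [hJc] at hmain
  refine le_trans (Nat.mul_le_mul_right _ (card_le_card ?_)) hmain
  intro x hx
  simp only [mem_filter, mem_univ, true_and] at hx ⊢
  intro j hj
  by_contra hcon
  refine hx ⟨insert j B, ?_, fun i hi => mem_insert_of_mem (hsB i hi), ?_, ?_⟩
  · rw [card_insert_of_notMem (hJ2 j hj)]; omega
  · intro i hi
    rcases mem_insert.1 hi with rfl | h
    · have := hJ1 _ hj
      omega
    · have := hBa i h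
      omega
  · rw [not_lt] at hcon
    rwa [rows_succ a (by omega)]

open Classical in
/-- Exposing one more column decreases `s` with probability at least `1 / 4`, at the cost of a
factor `2` in the heaviness. For unused columns `j ≠ k`, write `p` for the heavy permanent and
`q j` for the one obtained by exchanging `s` and `j` between rows and columns; the three quantities
`p + q j`, `p + q k`, `q j + q k` are mixed coefficients of permanents of the extended matrix, and
since `2 * p = (p + q j) + (p + q k) - (q j + q k)` one of them is large. -/
lemma card_decrease (ha : n ≤ a) {s : ℕ} (hs : 1 ≤ s) {μ : ℝ} (hμ0 : 0 < μ)
    (h : HeavyAt (extCol N M ω) a (s + 1) μ) :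
    2 ^ N ≤
      4 * #{x : Fin N → Bool | HeavyAt (extCol N M (Function.update ω a x)) (a + 1) s (μ / 2)} := by
  obtain ⟨B, hcard, hsB, hBa, hμ⟩ := h
  have hJc := card_unused a.2.le hcard hBa
  obtain ⟨j, hj, k, hk, hjk⟩ := one_lt_card.1 (by rw [hJc]; omega)
  have hjB := (mem_sdiff.1 hj).2
  have hkB := (mem_sdiff.1 hk).2
  have hja : (j : ℕ) < a := by simpa using (mem_sdiff.1 hj).1
  have hka : (k : ℕ) < a := by simpa using (mem_sdiff.1 hk).1
  have hjs : s + 1 ≤ j := by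
    by_contra hc; exact hjB (hsB j (by omega))
  have hks : s + 1 ≤ k := by
    by_contra hc; exact hkB (hsB k (by omega))
  obtain ⟨t, ht⟩ : ∃ t : Fin N, (t : ℕ) = s := ⟨⟨s, by omega⟩, rfl⟩
  have htB : t ∈ B := hsB t (by omega)
  set R : Finset (Fin N) := {i : Fin N | s ≤ (i : ℕ) ∧ (i : ℕ) < a} with hR
  have hRa : ∀ i ∈ R, i < a := fun i hi => by simpa using (mem_filter.1 hi).2.2
  have htR : t ∈ R := by simp only [hR, mem_filter, mem_univ, true_and]; omega
  have hjR : j ∈ R := by simp only [hR, mem_filter, mem_univ, true_and]; omega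
  have hkR : k ∈ R := by simp only [hR, mem_filter, mem_univ, true_and]; omega
  have htj : t ≠ j := fun h => hjB (h ▸ htB)
  have htk : t ≠ k := fun h => hkB (h ▸ htB)
  have hRt : R.erase t =
      ({i : Fin N | s + 1 ≤ (i : ℕ) ∧ (i : ℕ) < a} : Finset (Fin N)) := by
    ext i
    simp only [hR, mem_erase, mem_filter, mem_univ, true_and, ne_eq, Fin.ext_iff]
    omega
  rw [← hRt] at hμ
  -- A mixed coefficient of size at least `μ / 2` for the column set `U` suffices.
  have main : ∀ (U : Finset (Fin N)) (u v : Fin N), #U + s = a →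
      (∀ i : Fin N, (i : ℕ) < s → i ∈ U) → (∀ i ∈ U, i < a) → u ≠ v → u ∈ R → v ∈ R →
      u ∈ U → v ∈ U →
      μ / 2 ≤ |permOn (extCol N M ω) (R.erase u) (U.erase v) +
        permOn (extCol N M ω) (R.erase v) (U.erase u)| →
      2 ^ N ≤ 4 * #{x : Fin N → Bool |
        HeavyAt (extCol N M (Function.update ω a x)) (a + 1) s (μ / 2)} := by
    intro U u v hUc hsU hUa huv huR hvR huU hvU hc
    refine (step_pair a (extCol N M ω) (fun x => extCol N M (Function.update ω a x))
      (extCol_old M ω a) (extCol_row M ω a ha) (extCol_col M ω a ha) R U hRa hUa u v huv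
      huR hvR huU hvU _ hc).trans (Nat.mul_le_mul_left _ (card_le_card ?_))
    intro x hx
    simp only [mem_filter, mem_univ, true_and] at hx ⊢
    refine ⟨insert a U, ?_, fun i hi => mem_insert_of_mem (hsU i hi), ?_, ?_⟩
    · rw [card_insert_of_notMem fun h => lt_irrefl _ (hUa a h)]; omega
    · intro i hi
      rcases mem_insert.1 hi with rfl | h
      · omega
      · have := hUa i h
        omega
    · rwa [rows_succ a (by omega)]
  -- The column sets realising `p + q j` and `p + q k`.
  have single : ∀ l : Fin N, l ∉ B → (l : ℕ) < a → l ∈ R → t ≠ l →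
      μ / 2 ≤ |permOn (extCol N M ω) (R.erase t) B +
        permOn (extCol N M ω) (R.erase l) (insert l (B.erase t))| →
      2 ^ N ≤ 4 * #{x : Fin N → Bool |
        HeavyAt (extCol N M (Function.update ω a x)) (a + 1) s (μ / 2)} := by
    intro l hlB hla hlR htl hc
    refine main (insert l B) t l ?_ (fun i hi => mem_insert_of_mem (hsB i (by omega))) ?_ htl
      htR hlR (mem_insert_of_mem htB) (mem_insert_self _ _) ?_
    · rw [card_insert_of_notMem hlB]; omega
    · intro i hi
      rcases mem_insert.1 hi with rfl | h
      · exact hla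
      · exact hBa i h
    · rwa [erase_insert hlB, erase_insert_of_ne htl.symm]
  by_cases h1 : μ / 2 ≤ |permOn (extCol N M ω) (R.erase t) B +
      permOn (extCol N M ω) (R.erase j) (insert j (B.erase t))|
  · exact single j hjB hja hjR htj h1
  by_cases h2 : μ / 2 ≤ |permOn (extCol N M ω) (R.erase t) B +
      permOn (extCol N M ω) (R.erase k) (insert k (B.erase t))|
  · exact single k hkB hka hkR htk h2
  have hjB' : j ∉ B.erase t := fun h => hjB (mem_of_mem_erase h)
  have hkB' : k ∉ B.erase t := fun h => hkB (mem_of_mem_erase h)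
  have hkB'' : k ∉ insert j (B.erase t) := by
    rw [mem_insert, not_or]; exact ⟨hjk.symm, hkB'⟩
  have hjB'' : j ∉ insert k (B.erase t) := by
    rw [mem_insert, not_or]; exact ⟨hjk, hjB'⟩
  refine main (insert k (insert j (B.erase t))) j k ?_ ?_ ?_ hjk hjR hkR
    (mem_insert_of_mem (mem_insert_self _ _)) (mem_insert_self _ _) ?_
  · rw [card_insert_of_notMem hkB'', card_insert_of_notMem hjB', card_erase_of_mem htB]
    have := card_pos.2 ⟨t, htB⟩
    omega
  · intro i hi
    refine mem_insert_of_mem (mem_insert_of_mem (mem_erase.2 ⟨?_, hsB i (by omega)⟩))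
    rintro rfl
    omega
  · intro i hi
    rcases mem_insert.1 hi with rfl | h
    · exact hka
    rcases mem_insert.1 h with rfl | h
    · exact hja
    · exact hBa i (mem_of_mem_erase h)
  · rw [erase_insert hkB'', insert_comm, erase_insert hjB'']
    rw [not_le, abs_lt] at h1 h2
    rcases le_abs.1 hμ with h | h
    · exact le_abs.2 (Or.inr (by linarith [h1.2, h2.2]))
    · exact le_abs.2 (Or.inl (by linarith [h1.1, h2.1]))

end Step

/-! ### Iteration and the probability bound -/

/-- Resampling one coordinate does not change the average. -/
lemma sum_update {N : ℕ} {C : Type*} [Fintype C] (a : Fin N) (f : (Fin N → C) → ℝ) :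
    ∑ ω : Fin N → C, ∑ x : C, f (Function.update ω a x) = Fintype.card C * ∑ ω, f ω := by
  classical
  -- Exchanging `ω a` and `x` is an involution.
  let e : (Fin N → C) × C ≃ (Fin N → C) × C :=
    { toFun := fun p => (Function.update p.1 a p.2, p.1 a)
      invFun := fun p => (Function.update p.1 a p.2, p.1 a)
      left_inv := fun p => by simp
      right_inv := fun p => by simp }
  calc ∑ ω : Fin N → C, ∑ x : C, f (Function.update ω a x)
      = ∑ p : (Fin N → C) × C, f (e p).1 := by rw [Fintype.sum_prod_type]; rfl
    _ = ∑ p : (Fin N → C) × C, f p.1 := e.sum_comp fun p => f p.1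
    _ = _ := by simp [Fintype.sum_prod_type, mul_sum]

/-- The bound on the failure probability with `k` columns left to expose and `d` decreases left to
achieve: each column is lost with probability at most `ε`, and the second term is an exponential
moment bound for a binomial variable with parameters `k` and `1 / 4` being less than `d`. -/
noncomputable def failBound (ε : ℝ) (k d : ℕ) : ℝ :=
  k * ε + if d = 0 then 0 else (5 / 4 : ℝ) ^ d * (19 / 20 : ℝ) ^ k

lemma failBound_nonneg {ε : ℝ} (hε : 0 ≤ ε) (k d : ℕ) : 0 ≤ failBound ε k d := by
  unfold failBound
  split_ifs <;> positivity

lemma failBound_zero (ε : ℝ) (k : ℕ) :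
    failBound ε k 0 + ε = failBound ε (k + 1) 0 := by
  simp [failBound]
  ring

lemma failBound_mono (ε : ℝ) (k d : ℕ) : failBound ε k d ≤ failBound ε k (d + 1) := by
  have hp : 0 < (5 / 4 : ℝ) ^ d * (19 / 20 : ℝ) ^ k := by positivity
  unfold failBound
  rw [pow_succ, if_neg d.succ_ne_zero]
  split_ifs <;> nlinarith

lemma failBound_succ (ε : ℝ) (k d : ℕ) :
    failBound ε k (d + 1) - (failBound ε k (d + 1) - failBound ε k d) / 4 + ε ≤
      failBound ε (k + 1) (d + 1) := by
  have hp : 0 < (5 / 4 : ℝ) ^ d * (19 / 20 : ℝ) ^ k := by positivity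
  unfold failBound
  rw [pow_succ, pow_succ]
  push_cast
  split_ifs <;> first | omega | nlinarith

open Classical in
/-- Backwards induction on the number `k` of unexposed columns. The function `Φ` is the conditional
probability of failure given the columns exposed so far. -/
lemma exists_condProb {n N T : ℕ} (hT : 1 ≤ T) (M : Matrix (Fin n) (Fin n) ℝ) {κ : ℝ}
    (hκ : 0 < κ) (k m : ℕ) (hm : m + k = N) (hnm : n ≤ m) :
    ∃ Φ : (Fin N → Fin N → Bool) → ℝ,
      ∑ ω, Φ ω = #{ω : Fin N → Fin N → Bool | ¬ HeavyAt (extCol N M ω) N T κ} ∧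
      (∀ ω, Φ ω ≤ 1) ∧
      ∀ d ω, HeavyAt (extCol N M ω) m (T + d) (κ * 2 ^ d) →
        Φ ω ≤ failBound ((1 / 2) ^ T) k d := by
  induction k generalizing m with
  | zero =>
    obtain rfl : m = N := by omega
    refine ⟨fun ω => if HeavyAt (extCol m M ω) m T κ then 0 else 1, ?_, ?_, ?_⟩
    · rw [← sum_boole]
      refine sum_congr rfl fun ω _ => ?_
      split_ifs <;> simp_all
    · intro ω
      dsimp only
      split_ifs <;> norm_num
    · intro d ω hω
      cases d with
      | zero =>
        have : HeavyAt (extCol m M ω) m T κ := by simpa using hω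
        simp [this, failBound]
      | succ d =>
        have h1 : (1 : ℝ) ≤ (5 / 4 : ℝ) ^ (d + 1) := one_le_pow₀ (by norm_num)
        simp only [failBound]
        split_ifs <;> simp_all
        linarith
  | succ k ih =>
    obtain ⟨Φ, hsum, h1, hΦ⟩ := ih (m + 1) (by omega) (by omega)
    obtain ⟨a, rfl⟩ : ∃ a : Fin N, (a : ℕ) = m := ⟨⟨m, by omega⟩, rfl⟩
    have hC : (0 : ℝ) < 2 ^ N := by positivity
    have hcardC : (Fintype.card (Fin N → Bool) : ℝ) = 2 ^ N := by simp
    set ε : ℝ := (1 / 2) ^ T with hε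
    have hε0 : 0 ≤ ε := by positivity
    refine ⟨fun ω => (∑ x, Φ (Function.update ω a x)) / 2 ^ N, ?_, ?_, ?_⟩
    · rw [← sum_div, sum_update, hsum, hcardC]
      field_simp
    · intro ω
      rw [div_le_one hC, ← hcardC]
      refine (sum_le_sum fun x _ => h1 _).trans ?_
      simp
    · intro d ω hω
      rw [div_le_iff₀ hC]
      have hbad : (#{x : Fin N → Bool | ¬ HeavyAt (extCol N M (Function.update ω a x)) (a + 1)
          (T + d) (κ * 2 ^ d)} : ℝ) ≤ ε * 2 ^ N := by
        have h := card_not_keep M ω a hnm hω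
        have h' : (#{x : Fin N → Bool | ¬ HeavyAt (extCol N M (Function.update ω a x)) (a + 1)
          (T + d) (κ * 2 ^ d)} : ℝ) * 2 ^ (T + d) ≤ 2 ^ N := by exact_mod_cast h
        have h2 : (2 : ℝ) ^ T ≤ 2 ^ (T + d) := pow_le_pow_right₀ (by norm_num) (by omega)
        rw [hε, one_div, inv_pow, inv_mul_eq_div, le_div_iff₀ (by positivity)]
        exact (mul_le_mul_of_nonneg_left h2 (Nat.cast_nonneg _)).trans h'
      cases d with
      | zero =>
        have hpt : ∀ x, Φ (Function.update ω a x) ≤ failBound ε k 0 +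
            (if ¬ HeavyAt (extCol N M (Function.update ω a x)) (a + 1) (T + 0) (κ * 2 ^ 0)
              then 1 else 0) := by
          intro x
          split_ifs with h
          · linarith [hΦ 0 _ h]
          · linarith [h1 (Function.update ω a x), failBound_nonneg hε0 k 0]
        refine (sum_le_sum fun x _ => hpt x).trans ?_
        rw [sum_add_distrib, sum_boole, sum_const, card_univ, nsmul_eq_mul, hcardC,
          ← failBound_zero]
        linarith
      | succ d =>
        have hdec : (2 : ℝ) ^ N ≤ 4 * #{x : Fin N → Bool |
            HeavyAt (extCol N M (Function.update ω a x)) (a + 1) (T + d) (κ * 2 ^ d)} := by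
          have h := card_decrease M ω a hnm (s := T + d) (by omega)
            (μ := κ * 2 ^ (d + 1)) (by positivity) hω
          rw [pow_succ, ← mul_assoc, mul_div_cancel_right₀ _ (two_ne_zero)] at h
          exact_mod_cast h
        set Δ := failBound ε k (d + 1) - failBound ε k d with hΔ
        have hΔ0 : 0 ≤ Δ := sub_nonneg.2 (failBound_mono ε k d)
        have hpt : ∀ x, Φ (Function.update ω a x) ≤ failBound ε k (d + 1) -
            (if HeavyAt (extCol N M (Function.update ω a x)) (a + 1) (T + d) (κ * 2 ^ d)
              then 1 else 0) * Δ +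
            (if ¬ HeavyAt (extCol N M (Function.update ω a x)) (a + 1) (T + (d + 1))
              (κ * 2 ^ (d + 1)) then 1 else 0) := by
          intro x
          by_cases h2 : HeavyAt (extCol N M (Function.update ω a x)) (a + 1) (T + d) (κ * 2 ^ d)
          · have h3 := hΦ d _ h2
            rw [if_pos h2]
            split_ifs <;> linarith
          · rw [if_neg h2]
            split_ifs with h
            · linarith [hΦ (d + 1) _ h]
            · linarith [h1 (Function.update ω a x), failBound_nonneg hε0 k (d + 1)]
        refine (sum_le_sum fun x _ => hpt x).trans ?_
        rw [sum_add_distrib, sum_sub_distrib, ← sum_mul, sum_boole, sum_boole, sum_const,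
          card_univ, nsmul_eq_mul, hcardC]
        have h4 := mul_le_mul_of_nonneg_right hdec hΔ0
        have h5 := mul_le_mul_of_nonneg_right (failBound_succ ε k d) hC.le
        rw [← hΔ] at h5
        nlinarith

lemma exp_bound (S T : ℕ) (hTS : T < S) :
    failBound ((1 / 2) ^ T) (5 * S) (S - T) ≤
      5 * (S : ℝ) * (1 / 2 : ℝ) ^ T + Real.exp (-(S : ℝ) / 40) := by
  unfold failBound
  rw [if_neg (by omega)]
  push_cast
  gcongr
  have h1 : (5 / 4 : ℝ) ^ (S - T) ≤ (5 / 4) ^ S :=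
    pow_le_pow_right₀ (by norm_num) (by omega)
  have h2 : (5 / 4 : ℝ) * (19 / 20) ^ 5 ≤ Real.exp (-1 / 40) := by
    have := Real.add_one_le_exp (-1 / 40 : ℝ)
    norm_num at this ⊢
    linarith
  calc (5 / 4 : ℝ) ^ (S - T) * (19 / 20) ^ (5 * S) ≤ (5 / 4) ^ S * (19 / 20) ^ (5 * S) := by
        gcongr
    _ = ((5 / 4 : ℝ) * (19 / 20) ^ 5) ^ S := by rw [mul_pow, pow_mul]
    _ ≤ Real.exp (-1 / 40) ^ S := by gcongr
    _ = Real.exp (-(S : ℝ) / 40) := by rw [← Real.exp_nat_mul]; ring_nf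

/-- The hypothesis on the initial block gives the initial heavy submatrix of every extension. -/
lemma heavyAt_init {n S : ℕ} (N : ℕ) (hnN : n ≤ N) (hSn : S < n) {lam : ℝ}
    (M : Matrix (Fin n) (Fin n) ℝ) (B : Finset (Fin n)) (hc : #B = n - S)
    (hS : ∀ i : Fin n, (i : ℕ) < S → i ∈ B)
    (hl : lam ≤ |permOn M (univ.filter fun i : Fin n => S ≤ (i : ℕ)) B|)
    (ω : Fin N → Fin N → Bool) : HeavyAt (extCol N M ω) n S lam := by
  refine ⟨B.map (Fin.castLEEmb hnN), ?_, ?_, ?_, ?_⟩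
  · rw [card_map]; omega
  · intro i hi
    exact mem_map.2 ⟨⟨i, by omega⟩, hS _ hi, by ext; simp⟩
  · intro i hi
    obtain ⟨j, _, rfl⟩ := mem_map.1 hi
    simp
  · have h1 : ({i : Fin N | S ≤ (i : ℕ) ∧ (i : ℕ) < n} : Finset (Fin N)) =
        (univ.filter fun i : Fin n => S ≤ (i : ℕ)).map (Fin.castLEEmb hnN) := by
      ext i
      simp only [mem_filter, mem_univ, true_and, mem_map]
      constructor
      · rintro ⟨h1, h2⟩
        exact ⟨⟨i, h2⟩, h1, by ext; simp⟩
      · rintro ⟨j, hj, rfl⟩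
        exact ⟨by simpa using hj, by simp⟩
    rw [h1, permOn_map]
    convert hl using 3
    ext i j
    simp [extCol, extSym]

/-- Iterative growth step: let `2 ≤ T < S < n` and `λ > 0`, and condition on a symmetric
`±1` outcome of `M_n` having a set `B` of size `n - S` with `{1,…,S} ⊆ B` such that
`M_n[{S+1,…,n}, B]` is `λ`-heavy. Then with probability at least
`1 - 5S·2^(-T) - e^(-S/40)` over the random extension to size `n + 5S`, there is a set `B'`
of size `n + 5S - T` with `{1,…,T} ⊆ B' ⊆ {1,…,n+5S}` such that
`M_{n+5S}[{T+1,…,n+5S}, B']` is `λ/2^(S-T)`-heavy. -/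
theorem iterative_growth (n S T : ℕ) (hT : 2 ≤ T) (hTS : T < S) (hSn : S < n)
    (lam : ℝ) (hlam : 0 < lam)
    (M : Matrix (Fin n) (Fin n) ℝ) (hsym : M.IsSymm)
    (hsign : ∀ i j, M i j = 1 ∨ M i j = -1)
    (hB : ∃ B : Finset (Fin n), B.card = n - S ∧ (∀ i : Fin n, (i : ℕ) < S → i ∈ B) ∧
      lam ≤ |permOn M (univ.filter fun i : Fin n => S ≤ (i : ℕ)) B|) :
    1 - 5 * (S : ℝ) * (1 / 2 : ℝ) ^ T - Real.exp (-(S : ℝ) / 40) ≤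
      probExt (n + 5 * S) M fun M' => ∃ B' : Finset (Fin (n + 5 * S)),
        B'.card = n + 5 * S - T ∧ (∀ i : Fin (n + 5 * S), (i : ℕ) < T → i ∈ B') ∧
        lam / 2 ^ (S - T) ≤
          |permOn M' (univ.filter fun i : Fin (n + 5 * S) => T ≤ (i : ℕ)) B'| := by
  classical
  obtain ⟨B, hc, hS, hl⟩ := hB
  set N := n + 5 * S with hN
  set κ := lam / 2 ^ (S - T) with hκ
  have hκ0 : 0 < κ := by positivity
  obtain ⟨Φ, hsum, -, hΦ⟩ := exists_condProb (by omega : 1 ≤ T) M hκ0 (5 * S) n hN.symm le_rfl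
  have hbound : ∀ ω, Φ ω ≤ failBound ((1 / 2) ^ T) (5 * S) (S - T) := by
    intro ω
    refine hΦ (S - T) ω ?_
    rw [Nat.add_sub_cancel' hTS.le, hκ, div_mul_cancel₀ _ (by positivity)]
    exact heavyAt_init N (by omega) hSn M B hc hS hl ω
  have hcardΩ : (Fintype.card (Fin N → Fin N → Bool) : ℝ) = 2 ^ (N * N) := by
    simp [pow_mul]
  have hfail := sum_le_sum fun ω (_ : ω ∈ (univ : Finset (Fin N → Fin N → Bool))) => hbound ω
  rw [hsum, sum_const, card_univ, nsmul_eq_mul, hcardΩ] at hfail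
  have hcompl : (#{ω : Fin N → Fin N → Bool | HeavyAt (extCol N M ω) N T κ} : ℝ) +
      #{ω : Fin N → Fin N → Bool | ¬ HeavyAt (extCol N M ω) N T κ} = 2 ^ (N * N) := by
    rw [← hcardΩ, ← card_univ]
    exact_mod_cast card_filter_add_card_filter_not (s := univ) _
  unfold probExt
  rw [le_div_iff₀ (by positivity)]
  -- Transposing the Boolean data turns column-indexed data into row-indexed data.
  have hle : #{ω : Fin N → Fin N → Bool | HeavyAt (extCol N M ω) N T κ} ≤
      #(univ.filter fun ω : Fin N → Fin N → Bool => ∃ B' : Finset (Fin N),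
        B'.card = N - T ∧ (∀ i : Fin N, (i : ℕ) < T → i ∈ B') ∧
        κ ≤ |permOn (extSym N M ω) (univ.filter fun i : Fin N => T ≤ (i : ℕ)) B'|) := by
    refine card_le_card_of_injOn (fun ω i j => ω j i) ?_ ?_
    · intro ω hω
      simp only [coe_filter, mem_univ, true_and, Set.mem_ofPred_eq] at hω ⊢
      obtain ⟨B', h1, h2, -, h4⟩ := hω
      refine ⟨B', by omega, h2, ?_⟩
      simpa [extCol] using h4
    · intro ω _ ω' _ h
      funext i j
      exact congrFun (congrFun h j) i
  have hle' : (#{ω : Fin N → Fin N → Bool | HeavyAt (extCol N M ω) N T κ} : ℝ) ≤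
      #(univ.filter fun ω : Fin N → Fin N → Bool => ∃ B' : Finset (Fin N),
        B'.card = N - T ∧ (∀ i : Fin N, (i : ℕ) < T → i ∈ B') ∧
        κ ≤ |permOn (extSym N M ω) (univ.filter fun i : Fin N => T ≤ (i : ℕ)) B'|) := by
    exact_mod_cast hle
  have hpos : (0 : ℝ) < 2 ^ (N * N) := by positivity
  have hexp := mul_le_mul_of_nonneg_left (exp_bound S T hTS) hpos.le
  refine le_trans ?_ (hle'.trans (le_of_eq ?_))
  · nlinarith
  · congr!
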